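/- Let T be a pretriangulated category in which every object is a finite direct sum of objects with local endomorphism rings (a Krull-Schmidt category). Let C and B be indecomposable objects, f: C → B a nonzero morphism that is not an isomorphism, and n ≥ 1. Suppose (a) for every indecomposable object X admitting a chain of irreducible maps of some length m ≥ 0 from C to X (including X = C via the empty chain), there exists an Auslander-Reiten triangle starting in X; and (b) there is no chain of irreducible maps from C to B of length less than n. Then there exist indecomposable objects P^1, …, P^n, irreducible morphisms g^1: C → P^1, g^2: P^1 → P^2, …, g^n: P^{n−1} → P^n, and a morphism h: P^n → B such that h ∘ g^n ∘ ⋯ ∘ g^1 ≠ 0. -/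

import Mathlib

/-!
The chain is built one map at a time. Let `c : D ⟶ X` and `h : X ⟶ B` satisfy `c ≫ h ≠ 0`,
where `X` and `B` are indecomposable and `h` is not an isomorphism. A split monomorphism from a
nonzero object into an indecomposable one is an isomorphism (`isIso_of_splitMono`), so `h` is not
a section. In an Auslander-Reiten triangle `X ⟶ Y ⟶ W ⟶ X⟦1⟧` with first map `u`, every
non-section out of `X` factors through `u` (`ar_factor`), so `h = u ≫ h'`. Decomposing `Y` as
a direct sum of objects `Yⱼ` with local endomorphism rings, some summand `c ≫ uⱼ ≫ h'ⱼ` of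
`c ≫ h` is nonzero, and `uⱼ : X ⟶ Yⱼ` is irreducible (`ar_component_irreducible`). The
construction can be repeated with `c ≫ uⱼ` and `h'ⱼ`: were `h'ⱼ` an isomorphism, `uⱼ ≫ h'ⱼ`
would be an irreducible map into `B`, giving a chain into `B`
shorter than is allowed, unless no further map is needed.

Only one half of the Auslander-Reiten property (lifting of non-retractions into `W`) is part of
the definition; the dual half `ar_factor` is deduced from it, using locality of `End X`.
-/

open CategoryTheory Limits Pretriangulated

variable {C : Type*} [Category C] [Preadditive C] [HasZeroObject C] [HasShift C ℤ]
  [∀ n : ℤ, (CategoryTheory.shiftFunctor C n).Additive] [Pretriangulated C]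
  [HasFiniteBiproducts C]

/-- An object is indecomposable if it is nonzero and not isomorphic to a direct sum of
two nonzero objects. -/
def Indec (X : C) : Prop :=
  ¬ IsZero X ∧ ∀ Y Z : C, ¬ IsZero Y → ¬ IsZero Z → IsEmpty (X ≅ Y ⊞ Z)

/-- An Auslander-Reiten triangle: a distinguished triangle with indecomposable end terms,
nonzero connecting morphism, such that every non-retraction into the third object factors
through the second morphism. -/
def IsARTriangle (T : Triangle C) : Prop :=
  (T ∈ (distTriang C)) ∧ Indec T.obj₁ ∧ Indec T.obj₃ ∧ T.mor₃ ≠ 0 ∧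
  ∀ (W : C) (f : W ⟶ T.obj₃), ¬ IsSplitEpi f → ∃ f' : W ⟶ T.obj₂, f' ≫ T.mor₂ = f

/-- A morphism is irreducible if it is neither a section nor a retraction, and in any
factorization one of the two factors is a section or a retraction respectively. -/
def IrreducibleMor {X Y : C} (f : X ⟶ Y) : Prop :=
  ¬ IsSplitMono f ∧ ¬ IsSplitEpi f ∧
  ∀ (Z : C) (h : X ⟶ Z) (g : Z ⟶ Y), h ≫ g = f → IsSplitMono h ∨ IsSplitEpi g

/-- There is a chain of irreducible maps of length `m` from `X` to `Y` through
indecomposable objects. -/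
def HasIrrChain : ℕ → C → C → Prop
  | 0, X, Y => X = Y
  | (m + 1), X, Y => ∃ Z : C, Indec Z ∧ (∃ g : X ⟶ Z, IrreducibleMor g) ∧ HasIrrChain m Z Y

/-- The composite of the first `m` maps of a sequence of composable morphisms. -/
def compChain (P : ℕ → C) (g : ∀ i, P i ⟶ P (i + 1)) : ∀ m : ℕ, (P 0 ⟶ P m)
  | 0 => 𝟙 (P 0)
  | (m + 1) => compChain P g m ≫ g m

/-- The endomorphism ring of `X` is local, in the form: if two endomorphisms sum to the
identity, then one of them is invertible. The zero object is not excluded. -/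
def LocalEnd (X : C) : Prop :=
  ∀ a b : X ⟶ X, a + b = 𝟙 X → IsIso a ∨ IsIso b

lemma localEnd_of_isLocalRing {X : C} (h : IsLocalRing (End X)) : LocalEnd X := by
  intro a b hab
  have := IsLocalRing.isUnit_or_isUnit_of_add_one (R := End X) (a := a) (b := b) hab
  rwa [isUnit_iff_isIso, isUnit_iff_isIso] at this

lemma not_isZero_of_isLocalRing {X : C} (h : IsLocalRing (End X)) : ¬ IsZero X := by
  intro h0
  exact (one_ne_zero : (1 : End X) ≠ 0) (h0.eq_of_src _ _)

/-- A split monomorphism from a nonzero object to an indecomposable one is an isomorphism: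
its cone is a complementary direct summand. -/
lemma isIso_of_splitMono {X Y : C} (hX : Indec X) (hY : ¬ IsZero Y) (s : Y ⟶ X)
    (hs : IsSplitMono s) : IsIso s := by
  obtain ⟨Z, g, k, hT⟩ := Pretriangulated.distinguished_cocone_triangle s
  have h3 : (Triangle.mk s g k).mor₃ = 0 :=
    Triangle.mor₃_eq_zero_of_mono₁ _ hT (inferInstanceAs (Mono s))
  obtain ⟨e, -, -⟩ := exists_iso_binaryBiproduct_of_distTriang _ hT h3
  by_cases hZ : IsZero Z
  · exact (Triangle.isZero₃_iff_isIso₁ _ hT).1 hZ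
  · exact ((hX.2 Y Z hY hZ).false e).elim

lemma LocalEnd.of_iso {X Y : C} (hY : LocalEnd Y) (e : Y ≅ X) : LocalEnd X := by
  intro a b hab
  have key : ∀ a : X ⟶ X, IsIso (e.hom ≫ a ≫ e.inv) → IsIso a := by
    intro a ha
    have : a = e.inv ≫ (e.hom ≫ a ≫ e.inv) ≫ e.hom := by simp
    rw [this]
    infer_instance
  refine (hY (e.hom ≫ a ≫ e.inv) (e.hom ≫ b ≫ e.inv) ?_).imp (key a) (key b)
  rw [← Preadditive.comp_add, ← Preadditive.add_comp, hab]
  simp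

lemma Indec.localEnd
    (hKS : ∀ X : C, ∃ (m : ℕ) (Y : Fin m → C),
      (∀ i, IsLocalRing (End (Y i))) ∧ Nonempty (X ≅ ⨁ Y))
    {X : C} (hX : Indec X) : LocalEnd X := by
  obtain ⟨m, Y, hY, ⟨e⟩⟩ := hKS X
  have hm : Nonempty (Fin m) := by
    by_contra hne
    rw [not_nonempty_iff] at hne
    apply hX.1
    refine IsZero.of_iso ?_ e
    rw [IsZero.iff_id_eq_zero, ← biproduct.total]
    simp
  obtain ⟨i⟩ := hm
  have := isIso_of_splitMono hX (not_isZero_of_isLocalRing (hY i))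
    (biproduct.ι Y i ≫ e.inv) inferInstance
  exact (localEnd_of_isLocalRing (hY i)).of_iso (asIso (biproduct.ι Y i ≫ e.inv))

lemma LocalEnd.indec {X : C} (hX : LocalEnd X) (h0 : ¬ IsZero X) : Indec X := by
  refine ⟨h0, fun Y Z hY hZ => ⟨fun e => ?_⟩⟩
  rcases hX (e.hom ≫ biprod.fst ≫ biprod.inl ≫ e.inv)
    (e.hom ≫ biprod.snd ≫ biprod.inr ≫ e.inv) (by
      rw [← Preadditive.comp_add, ← Category.assoc biprod.fst, ← Category.assoc biprod.snd,
        ← Preadditive.add_comp, biprod.total]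
      simp) with h | h
  · apply hZ
    have h1 : (biprod.inr : Z ⟶ Y ⊞ Z) ≫ e.inv = 0 := by
      rw [← cancel_mono (e.hom ≫ biprod.fst ≫ biprod.inl ≫ e.inv)]
      simp
    rw [IsZero.iff_id_eq_zero]
    simpa using congrArg (fun t => t ≫ e.hom ≫ (biprod.snd : Y ⊞ Z ⟶ Z)) h1
  · apply hY
    have h1 : (biprod.inl : Y ⟶ Y ⊞ Z) ≫ e.inv = 0 := by
      rw [← cancel_mono (e.hom ≫ biprod.snd ≫ biprod.inr ≫ e.inv)]
      simp
    rw [IsZero.iff_id_eq_zero]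
    simpa using congrArg (fun t => t ≫ e.hom ≫ (biprod.fst : Y ⊞ Z ⟶ Y)) h1

/-- In an Auslander-Reiten triangle `X ⟶ Y ⟶ W ⟶ X⟦1⟧`, every morphism out of `X` that is not a
section factors through `X ⟶ Y`. -/
lemma ar_factor {X Y W : C} {u : X ⟶ Y} {v : Y ⟶ W} {w : W ⟶ X⟦(1 : ℤ)⟧}
    (hT : IsARTriangle (Triangle.mk u v w)) (hX : LocalEnd X)
    {B : C} (h : X ⟶ B) (hh : ¬ IsSplitMono h) : ∃ h' : Y ⟶ B, u ≫ h' = h := by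
  obtain ⟨hd, -, -, hw, hlift⟩ := hT
  change w ≠ 0 at hw
  change ∀ (V : C) (f : V ⟶ W), ¬ IsSplitEpi f → ∃ f' : V ⟶ Y, f' ≫ v = f at hlift
  have hz : w ≫ h⟦(1 : ℤ)⟧' = 0 := by
    by_contra hne
    obtain ⟨E, a, b, hT'⟩ := distinguished_cocone_triangle₂ (w ≫ h⟦(1 : ℤ)⟧')
    have hb : ¬ IsSplitEpi b := fun hb => hne
      ((Triangle.mor₃_eq_zero_iff_epi₂ _ hT').2 (inferInstanceAs (Epi b)))
    obtain ⟨b', hb'⟩ := hlift E b hb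
    obtain ⟨φ, -, hφ⟩ := complete_distinguished_triangle_morphism₁ _ _ hT' hd b' (𝟙 W)
      ((Category.comp_id b).trans hb'.symm)
    change B ⟶ X at φ
    change (w ≫ h⟦(1 : ℤ)⟧') ≫ φ⟦(1 : ℤ)⟧' = 𝟙 W ≫ w at hφ
    -- `h ≫ φ` fixes `w ≠ 0`, so locality of `End X` makes it invertible and `h` a section.
    have hfix : w ≫ (𝟙 X - h ≫ φ)⟦(1 : ℤ)⟧' = 0 := by
      rw [Functor.map_sub, Preadditive.comp_sub, Functor.map_comp, CategoryTheory.Functor.map_id,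
        Category.comp_id, ← Category.assoc, hφ, Category.id_comp, sub_self]
    rcases hX (h ≫ φ) (𝟙 X - h ≫ φ) (by abel) with hi | hi
    · exact hh (IsSplitMono.mk' ⟨φ ≫ inv (h ≫ φ), by rw [← Category.assoc, IsIso.hom_inv_id]⟩)
    · exact hw ((cancel_mono ((𝟙 X - h ≫ φ)⟦(1 : ℤ)⟧')).1 (by rw [hfix, zero_comp]))
  obtain ⟨h', hh', -⟩ := complete_distinguished_triangle_morphism₂ _ _ hd
    (contractible_distinguished B) h 0 (hz.trans zero_comp.symm)
  exact ⟨h', hh'.trans (Category.comp_id h)⟩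

/-- The component of `X ⟶ Y`, in an Auslander-Reiten triangle `X ⟶ Y ⟶ W ⟶ X⟦1⟧`, at a direct
summand of `Y` with local endomorphism ring is irreducible. -/
lemma ar_component_irreducible {X Y W : C} {u : X ⟶ Y} {v : Y ⟶ W} {w : W ⟶ X⟦(1 : ℤ)⟧}
    (hT : IsARTriangle (Triangle.mk u v w)) (hX : LocalEnd X)
    {Z : C} (hZ : LocalEnd Z) (hZ0 : ¬ IsZero Z) (i : Z ⟶ Y) (p : Y ⟶ Z) (hip : i ≫ p = 𝟙 Z) :
    IrreducibleMor (u ≫ p) := by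
  have hfac := @ar_factor C _ _ _ _ _ _ _ _ _ _ u v w hT hX
  obtain ⟨hd, hXi, hWi, hw, -⟩ := hT
  change Indec X at hXi
  change Indec W at hWi
  change w ≠ 0 at hw
  have hmono : ¬ IsSplitMono (u ≫ p) := by
    intro hs
    have : Mono u := mono_of_mono u p
    exact hw (Triangle.mor₃_eq_zero_of_mono₁ _ hd this)
  refine ⟨hmono, ?_, ?_⟩
  · intro (hs : IsSplitEpi (u ≫ p))
    have hi : IsIso (section_ (u ≫ p)) := isIso_of_splitMono hXi hZ0 _
      (IsSplitMono.mk' ⟨u ≫ p, IsSplitEpi.id (u ≫ p)⟩)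
    have he : u ≫ p = inv (section_ (u ≫ p)) := by
      rw [← cancel_epi (section_ (u ≫ p)), IsSplitEpi.id, IsIso.hom_inv_id]
    exact hmono (by rw [he]; infer_instance)
  · intro V h g hg
    by_cases hh : IsSplitMono h
    · exact Or.inl hh
    right
    obtain ⟨h', rfl⟩ := hfac h hh
    obtain ⟨t, ht⟩ := Triangle.yoneda_exact₂ _ hd (p - h' ≫ g) (by
      change u ≫ (p - h' ≫ g) = 0
      rw [Preadditive.comp_sub, ← hg, Category.assoc, sub_self])
    change W ⟶ Z at t
    change p - h' ≫ g = v ≫ t at ht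
    rcases hZ (i ≫ h' ≫ g) (i ≫ v ≫ t)
      (by rw [← ht, Preadditive.comp_sub, hip]; abel) with hi | hi
    · exact IsSplitEpi.mk' ⟨inv (i ≫ h' ≫ g) ≫ i ≫ h', by
        simp only [Category.assoc]; exact IsIso.inv_hom_id _⟩
    · exfalso
      have hiv : IsSplitMono (i ≫ v) := IsSplitMono.mk' ⟨t ≫ inv (i ≫ v ≫ t), by
        rw [← Category.assoc, Category.assoc i v t, IsIso.hom_inv_id]⟩
      have := isIso_of_splitMono hWi hZ0 (i ≫ v) hiv
      have hv : Epi v := @epi_of_epi _ _ _ _ _ i v (@IsIso.epi_of_iso _ _ _ _ _ this)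
      exact hw ((Triangle.mor₃_eq_zero_iff_epi₂ _ hd).2 hv)

lemma IrreducibleMor.comp_iso {X Y Z : C} {f : X ⟶ Y} (hf : IrreducibleMor f) (e : Y ⟶ Z)
    [IsIso e] : IrreducibleMor (f ≫ e) := by
  refine ⟨fun h => hf.1 ?_, fun h => hf.2.1 ?_, fun V a b hab => ?_⟩
  · exact IsSplitMono.mk' ⟨e ≫ retraction (f ≫ e), by
      rw [← Category.assoc, IsSplitMono.id]⟩
  · have : f = (f ≫ e) ≫ inv e := by simp
    rw [this]
    infer_instance
  · refine (hf.2.2 V a (b ≫ inv e) (by rw [← Category.assoc, hab]; simp)).imp_right fun h => ?_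
    have : IsSplitEpi (b ≫ inv e) := h
    simpa using (inferInstance : IsSplitEpi ((b ≫ inv e) ≫ e))

/-- If `h : X ⟶ B` is not a section and does not vanish after precomposition with `c`, then some
component `X ⟶ Z` of an Auslander-Reiten triangle starting in `X` can be split off from `h`
without making the composite vanish. -/
lemma exists_irreducible_step
    (hKS : ∀ X : C, ∃ (m : ℕ) (Y : Fin m → C),
      (∀ i, IsLocalRing (End (Y i))) ∧ Nonempty (X ≅ ⨁ Y))
    {D X B : C} (hX : Indec X)
    (hAR : ∃ (Y W : C) (u : X ⟶ Y) (v : Y ⟶ W) (w : W ⟶ X⟦(1 : ℤ)⟧),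
        IsARTriangle (Triangle.mk u v w))
    (c : D ⟶ X) (h : X ⟶ B) (hh : ¬ IsSplitMono h) (hc : c ≫ h ≠ 0) :
    ∃ (Z : C) (g : X ⟶ Z) (k : Z ⟶ B), Indec Z ∧ IrreducibleMor g ∧ (c ≫ g) ≫ k ≠ 0 := by
  obtain ⟨Y, W, u, v, w, hT⟩ := hAR
  obtain ⟨h', rfl⟩ := ar_factor hT (hX.localEnd hKS) h hh
  obtain ⟨m, Yf, hYf, ⟨e⟩⟩ := hKS Y
  have hex : ∃ j, (c ≫ u ≫ e.hom ≫ biproduct.π Yf j) ≫ (biproduct.ι Yf j ≫ e.inv ≫ h') ≠ 0 := by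
    by_contra! hall
    apply hc
    have h1 : h' = e.hom ≫ (∑ j, biproduct.π Yf j ≫ biproduct.ι Yf j) ≫ e.inv ≫ h' := by
      rw [biproduct.total]; simp
    rw [h1]
    simp only [Preadditive.sum_comp, Preadditive.comp_sum]
    exact Finset.sum_eq_zero fun j _ => by simpa using hall j
  obtain ⟨j, hj⟩ := hex
  have hl := localEnd_of_isLocalRing (hYf j)
  have h0 := not_isZero_of_isLocalRing (hYf j)
  exact ⟨Yf j, u ≫ e.hom ≫ biproduct.π Yf j, biproduct.ι Yf j ≫ e.inv ≫ h', hl.indec h0,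
    ar_component_irreducible hT (hX.localEnd hKS) hl h0 (biproduct.ι Yf j ≫ e.inv)
      (e.hom ≫ biproduct.π Yf j) (by simp), hj⟩

/-- The inductive form of the theorem: the chain starts at an arbitrary indecomposable `X`, and
nonvanishing is tested after precomposition with a map `c : D ⟶ X`. Since `h` may be an
isomorphism once no further map has to be constructed, `¬ IsIso h` is only assumed for `k > 0`. -/
lemma exists_chain
    (hKS : ∀ X : C, ∃ (m : ℕ) (Y : Fin m → C),
      (∀ i, IsLocalRing (End (Y i))) ∧ Nonempty (X ≅ ⨁ Y))
    {D B : C} (hB : Indec B) (k : ℕ) :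
    ∀ (X : C) (_ : Indec X) (c : D ⟶ X) (h : X ⟶ B) (_ : 0 < k → ¬ IsIso h) (_ : c ≫ h ≠ 0)
      (_ : ∀ X' : C, Indec X' → (∃ m : ℕ, HasIrrChain m X X') →
        ∃ (Y W : C) (u : X' ⟶ Y) (v : Y ⟶ W) (w : W ⟶ X'⟦(1 : ℤ)⟧),
          IsARTriangle (Triangle.mk u v w))
      (_ : ∀ m : ℕ, m < k → ¬ HasIrrChain m X B),
      ∃ (P : ℕ → C) (g : ∀ i, P i ⟶ P (i + 1)) (h' : P k ⟶ B) (e : X = P 0),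
        (∀ i, i ≤ k → Indec (P i)) ∧ (∀ i, i < k → IrreducibleMor (g i)) ∧
        (c ≫ eqToHom e) ≫ compChain P g k ≫ h' ≠ 0 := by
  induction k with
  | zero =>
    intro X hX c h _ hc _ _
    exact ⟨fun _ => X, fun _ => 𝟙 X, h, rfl, fun _ _ => hX, fun i hi => absurd hi (by simp),
      by simpa [compChain] using hc⟩
  | succ k ih =>
    intro X hX c h hh hc ha hb
    have hsplit : ¬ IsSplitMono h := fun hs =>
      hh k.succ_pos (isIso_of_splitMono hB hX.1 h hs)
    obtain ⟨Z, g₀, h₁, hZ, hg₀, hc₁⟩ :=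
      exists_irreducible_step hKS hX (ha X hX ⟨0, rfl⟩) c h hsplit hc
    obtain ⟨P, g, h', e, hP, hg, hne⟩ := ih Z hZ (c ≫ g₀) h₁
      (fun hk hi => hb 1 (by omega) ⟨B, hB, ⟨g₀ ≫ h₁, hg₀.comp_iso h₁⟩, rfl⟩)
      hc₁
      (fun X' hX' ⟨m, hm⟩ => ha X' hX' ⟨m + 1, Z, hZ, ⟨g₀, hg₀⟩, hm⟩)
      (fun m hm hch => hb (m + 1) (by omega) ⟨Z, hZ, ⟨g₀, hg₀⟩, hch⟩)
    subst e
    let P' : ℕ → C := fun i => Nat.casesOn i X P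
    let g' : ∀ i, P' i ⟶ P' (i + 1) := fun i => match i with
      | 0 => g₀
      | i + 1 => g i
    have hcomp : ∀ m, compChain P' g' (m + 1) = g₀ ≫ compChain P g m := by
      intro m
      induction m with
      | zero => exact (Category.id_comp g₀).trans (Category.comp_id g₀).symm
      | succ m ihm =>
        change compChain P' g' (m + 1) ≫ g m = g₀ ≫ compChain P g m ≫ g m
        rw [ihm]
        exact Category.assoc _ _ _
    refine ⟨P', g', h', rfl, ?_, ?_, ?_⟩
    · rintro (_ | i) hi
      · exact hX
      · exact hP i (by omega)
    · rintro (_ | i) hi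
      · exact hg₀
      · exact hg i (by omega)
    · rw [hcomp]
      intro hz
      apply hne
      rw [← hz, eqToHom_refl, Category.comp_id]
      have hassoc : (c ≫ g₀) ≫ compChain P g k ≫ h' =
          (c ≫ 𝟙 X) ≫ (g₀ ≫ compChain P g k) ≫ h' := by simp
      exact hassoc

/-- In a Krull-Schmidt pretriangulated category, if `f : C ⟶ B` is a nonzero
non-isomorphism between indecomposables, every indecomposable having a chain of
irreducible maps from `C` admits an Auslander-Reiten triangle starting in it, and there
is no chain of irreducible maps from `C` to `B` of length `< n`, then there is a chain of
`n` irreducible maps `C → P¹ → ⋯ → Pⁿ` and a map `h : Pⁿ ⟶ B` with nonzero composite. -/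
theorem chain_of_irreducibles_from_C
    (hKS : ∀ X : C, ∃ (m : ℕ) (Y : Fin m → C),
      (∀ i, IsLocalRing (End (Y i))) ∧ Nonempty (X ≅ ⨁ Y))
    {Co B : C} (hCo : Indec Co) (hB : Indec B)
    (f : Co ⟶ B) (hf0 : f ≠ 0) (hfiso : ¬ IsIso f)
    (n : ℕ) (hn : 1 ≤ n)
    (ha : ∀ X : C, Indec X → (∃ m : ℕ, HasIrrChain m Co X) →
      ∃ (Y W : C) (u : X ⟶ Y) (v : Y ⟶ W) (w : W ⟶ X⟦(1 : ℤ)⟧),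
        IsARTriangle (Triangle.mk u v w))
    (hb : ∀ m : ℕ, m < n → ¬ HasIrrChain m Co B) :
    ∃ (P : ℕ → C) (g : ∀ i, P i ⟶ P (i + 1)) (h : P n ⟶ B),
      P 0 = Co ∧ (∀ i, 1 ≤ i → i ≤ n → Indec (P i)) ∧
      (∀ i, i < n → IrreducibleMor (g i)) ∧
      compChain P g n ≫ h ≠ 0 := by
  obtain ⟨P, g, h, e, hP, hg, hne⟩ := exists_chain hKS hB n Co hCo (𝟙 Co) f (fun _ => hfiso)
    (by simpa using hf0) ha hb
  refine ⟨P, g, h, e.symm, fun i _ hi => hP i hi, hg, fun hz => hne ?_⟩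
  rw [hz, comp_zero]
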